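/- Let G be a finite simple graph, and let 𝔬₁ and 𝔬₂ be two alternating orientations of G. Then the path posets P(G_𝔬₁) and P(G_𝔬₂) are order-isomorphic. -/

import Mathlib

/-- The indegree of `v` in a set `S` of directed edges. -/
def indegIn {V : Type*} [DecidableEq V] (S : Finset (V × V)) (v : V) : ℕ :=
  (S.filter fun e => e.2 = v).card

/-- The outdegree of `v` in a set `S` of directed edges. -/
def outdegIn {V : Type*} [DecidableEq V] (S : Finset (V × V)) (v : V) : ℕ :=
  (S.filter fun e => e.1 = v).card

/-- `D` is an orientation of the simple graph `G`: it consists of directed versions of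
edges of `G`, and each edge `{v,w}` of `G` receives exactly one of the two directions. -/
def IsOrientation {V : Type*} (G : SimpleGraph V) (D : Finset (V × V)) : Prop :=
  (∀ p ∈ D, G.Adj p.1 p.2) ∧ ∀ v w : V, G.Adj v w → ((v, w) ∈ D ↔ (w, v) ∉ D)

/-- An orientation (given as a set `D` of directed edges) is alternating if the vertex
set splits into a part where every vertex has indegree 0 and a part where every vertex
has outdegree 0. -/
def IsAlternating {V : Type*} [DecidableEq V] (D : Finset (V × V)) : Prop :=
  ∃ A : Set V, (∀ v ∈ A, indegIn D v = 0) ∧ ∀ v ∉ A, outdegIn D v = 0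

/-- `S` contains a coherently oriented cycle: a nonempty cyclic sequence of pairwise
distinct edges of `S` in which the target of each edge is the source of the next. -/
def HasCohCycle {V : Type*} (S : Finset (V × V)) : Prop :=
  ∃ (n : ℕ) (f : ZMod (n + 1) → V × V), Function.Injective f ∧
    (∀ i, f i ∈ S) ∧ ∀ i, (f i).2 = (f (i + 1)).1

/-- `S` is a multipath of the oriented graph with edge set `D`: a subset of `D` in which
every vertex has indegree and outdegree at most 1 and which contains no coherently
oriented cycle. -/
def IsMultipathIn {V : Type*} [DecidableEq V] (D S : Finset (V × V)) : Prop :=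
  S ⊆ D ∧ (∀ v : V, indegIn S v ≤ 1) ∧ (∀ v : V, outdegIn S v ≤ 1) ∧ ¬ HasCohCycle S

/-- A matching on a simple graph `G`: a set of edges of `G` that are pairwise disjoint. -/
def IsGraphMatching {V : Type*} (G : SimpleGraph V) (m : Finset (Sym2 V)) : Prop :=
  (∀ e ∈ m, e ∈ G.edgeSet) ∧
    ∀ e ∈ m, ∀ e' ∈ m, e ≠ e' → ∀ v : V, v ∈ e → v ∉ e'

/-!
In an alternating orientation no directed edge starts where another one ends. So there are no
coherent cycles, and two directed edges sharing a vertex share their source or share their target.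
Hence a set of directed edges is a multipath exactly when forgetting the directions turns it into a
matching of `G`. As every edge of `G` carries exactly one direction, the path poset is isomorphic
to the poset of matchings of `G`, which does not depend on the orientation.
-/

section Image

variable {α β : Type*} [DecidableEq β]

/-- The order isomorphism `S ↦ f(S)` between finite subsets of `D` satisfying `P` and finite
subsets of `E` satisfying `Q`, for a bijection `f : D → E` under which `P` and `Q` correspond. -/
noncomputable def finsetImageOrderIso {f : α → β} {D : Set α} {E : Set β} (hf : Set.BijOn f D E)
    {P : Finset α → Prop} {Q : Finset β → Prop} (hPD : ∀ S, P S → ↑S ⊆ D)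
    (hQE : ∀ T, Q T → ↑T ⊆ E) (hPQ : ∀ S : Finset α, ↑S ⊆ D → (P S ↔ Q (S.image f))) :
    {S // P S} ≃o {T // Q T} :=
  RelIso.ofSurjective
    (OrderEmbedding.ofMapLEIff
      (fun S ↦ ⟨S.1.image f, (hPQ S.1 (hPD S.1 S.2)).1 S.2⟩)
      fun S T ↦ by
        have himage := hf.injOn.image_subset_image_iff (hPD S.1 S.2) (hPD T.1 T.2)
        exact mod_cast himage)
    (by
      rintro ⟨T, hT⟩
      obtain ⟨S, hSD, rfl⟩ := Finset.subset_set_image_iff.1 (hf.image_eq.symm ▸ hQE T hT)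
      exact ⟨⟨S, (hPQ S hSD).2 hT⟩, rfl⟩)

theorem forall_card_filter_eq_le_one_iff_injOn {s : Finset α} {f : α → β} :
    (∀ b, (s.filter fun a ↦ f a = b).card ≤ 1) ↔ Set.InjOn f s := by
  simp only [Finset.card_le_one, Finset.mem_filter]
  exact ⟨fun h a ha a' ha' e ↦ h (f a') a ⟨ha, e⟩ a' ⟨ha', rfl⟩,
    fun h _ _ ha _ ha' ↦ h ha.1 ha'.1 (ha.2.trans ha'.2.symm)⟩

end Image

section DirectedEdges

variable {V : Type*}

/-- The undirected edge obtained from a directed edge by forgetting its direction. -/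
def underlyingEdge (p : V × V) : Sym2 V :=
  s(p.1, p.2)

theorem disjoint_underlyingEdge_iff {p q : V × V} (hpq : p.2 ≠ q.1) (hqp : q.2 ≠ p.1) :
    (∀ v ∈ underlyingEdge p, v ∉ underlyingEdge q) ↔ p.1 ≠ q.1 ∧ p.2 ≠ q.2 := by
  simp only [underlyingEdge, Sym2.mem_iff]
  grind

theorem HasCohCycle.exists_snd_eq_fst {S : Finset (V × V)} (h : HasCohCycle S) :
    ∃ p ∈ S, ∃ q ∈ S, p.2 = q.1 := by
  obtain ⟨n, f, -, hfS, hf⟩ := h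
  exact ⟨f 0, hfS 0, f (0 + 1), hfS _, hf 0⟩

variable [DecidableEq V] {D S : Finset (V × V)}

theorem indegIn_eq_zero_iff {v : V} : indegIn S v = 0 ↔ ∀ p ∈ S, p.2 ≠ v := by
  rw [indegIn, Finset.card_eq_zero, Finset.filter_eq_empty_iff]

theorem outdegIn_eq_zero_iff {v : V} : outdegIn S v = 0 ↔ ∀ p ∈ S, p.1 ≠ v := by
  rw [outdegIn, Finset.card_eq_zero, Finset.filter_eq_empty_iff]

theorem IsAlternating.snd_ne_fst (hD : IsAlternating D) {p q : V × V} (hp : p ∈ D) (hq : q ∈ D) :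
    p.2 ≠ q.1 := by
  obtain ⟨A, hin, hout⟩ := hD
  intro hpq
  by_cases hA : p.2 ∈ A
  · exact indegIn_eq_zero_iff.1 (hin _ hA) p hp rfl
  · exact outdegIn_eq_zero_iff.1 (hout _ hA) q hq hpq.symm

theorem IsAlternating.isMultipathIn_iff_pairwise (hD : IsAlternating D) (hS : S ⊆ D) :
    IsMultipathIn D S ↔
      (S : Set (V × V)).Pairwise fun p q ↦ ∀ v ∈ underlyingEdge p, v ∉ underlyingEdge q := by
  have hcycle : ¬ HasCohCycle S := fun h ↦
    let ⟨_, hp, _, hq, hpq⟩ := h.exists_snd_eq_fst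
    hD.snd_ne_fst (hS hp) (hS hq) hpq
  have hdisj {p q : V × V} (hp : p ∈ S) (hq : q ∈ S) :
      (∀ v ∈ underlyingEdge p, v ∉ underlyingEdge q) ↔ p.1 ≠ q.1 ∧ p.2 ≠ q.2 :=
    disjoint_underlyingEdge_iff (hD.snd_ne_fst (hS hp) (hS hq)) (hD.snd_ne_fst (hS hq) (hS hp))
  calc
    IsMultipathIn D S ↔
        Set.InjOn Prod.snd (S : Set (V × V)) ∧ Set.InjOn Prod.fst (S : Set (V × V)) := by
      simp only [IsMultipathIn, indegIn, outdegIn, forall_card_filter_eq_le_one_iff_injOn, hS,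
        hcycle, not_false_eq_true, true_and, and_true]
    _ ↔ _ := by
      rw [Set.injOn_iff_pairwise_ne, Set.injOn_iff_pairwise_ne]
      constructor
      · rintro ⟨hsnd, hfst⟩ p hp q hq hpq
        exact (hdisj hp hq).2 ⟨hfst hp hq hpq, hsnd hp hq hpq⟩
      · intro h
        exact ⟨fun p hp q hq hpq ↦ ((hdisj hp hq).1 (h hp hq hpq)).2,
          fun p hp q hq hpq ↦ ((hdisj hp hq).1 (h hp hq hpq)).1⟩

end DirectedEdges

section Orientation

variable {V : Type*} {G : SimpleGraph V} {D : Finset (V × V)}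

theorem IsOrientation.bijOn_underlyingEdge (hD : IsOrientation G D) :
    Set.BijOn underlyingEdge (D : Set (V × V)) G.edgeSet := by
  refine ⟨hD.1, ?_, ?_⟩
  · rintro ⟨a, b⟩ hab ⟨c, d⟩ hcd h
    rcases Sym2.eq_iff.1 h with ⟨rfl, rfl⟩ | ⟨rfl, rfl⟩
    · rfl
    · exact absurd hcd ((hD.2 _ _ (hD.1 _ hab)).1 hab)
  · rintro ⟨a, b⟩ hab
    by_cases h : (a, b) ∈ D
    · exact ⟨(a, b), h, rfl⟩
    · exact ⟨(b, a), (hD.2 _ _ hab.symm).2 h, Sym2.eq_swap⟩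

variable [DecidableEq V] {S : Finset (V × V)}

theorem IsOrientation.isGraphMatching_image_iff_pairwise (hD : IsOrientation G D) (hS : S ⊆ D) :
    IsGraphMatching G (S.image underlyingEdge) ↔
      (S : Set (V × V)).Pairwise fun p q ↦ ∀ v ∈ underlyingEdge p, v ∉ underlyingEdge q := by
  have hedge : ∀ e ∈ S.image underlyingEdge, e ∈ G.edgeSet :=
    Finset.forall_mem_image.2 fun p hp ↦ hD.1 p (hS hp)
  have hinj : Set.InjOn underlyingEdge (S : Set (V × V)) :=
    hD.bijOn_underlyingEdge.injOn.mono (mod_cast hS)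
  calc
    IsGraphMatching G (S.image underlyingEdge) ↔
        (underlyingEdge '' (S : Set (V × V))).Pairwise fun e e' ↦ ∀ v ∈ e, v ∉ e' := by
      rw [← Finset.coe_image]
      exact and_iff_right hedge
    _ ↔ _ := hinj.pairwise_image

/-- Forgetting directions, as an order isomorphism from the path poset of an alternating
orientation of `G` onto the poset of matchings of `G`. -/
noncomputable def multipathOrderIsoMatching (hD : IsOrientation G D) (hDalt : IsAlternating D) :
    {S // IsMultipathIn D S} ≃o {m // IsGraphMatching G m} :=
  finsetImageOrderIso hD.bijOn_underlyingEdge (fun _ hS ↦ mod_cast hS.1) (fun _ hm ↦ hm.1)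
    fun _ hS ↦ (hDalt.isMultipathIn_iff_pairwise (mod_cast hS)).trans
      (hD.isGraphMatching_image_iff_pairwise (mod_cast hS)).symm

theorem pathPosets_of_alternating_orderIso_general {D₁ D₂ : Finset (V × V)}
    (h₁ : IsOrientation G D₁) (h₂ : IsOrientation G D₂)
    (ha₁ : IsAlternating D₁) (ha₂ : IsAlternating D₂) :
    Nonempty ({S : Finset (V × V) // IsMultipathIn D₁ S} ≃o
      {S : Finset (V × V) // IsMultipathIn D₂ S}) :=
  ⟨(multipathOrderIsoMatching h₁ ha₁).trans (multipathOrderIsoMatching h₂ ha₂).symm⟩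

end Orientation

/-- for two alternating orientations `𝔬₁`, `𝔬₂` of a finite simple graph
`G`, the path posets `P(G_𝔬₁)` and `P(G_𝔬₂)` are order-isomorphic. -/
theorem pathPosets_of_alternating_orderIso {V : Type*} [Fintype V] [DecidableEq V]
    (G : SimpleGraph V) (D₁ D₂ : Finset (V × V))
    (h₁ : IsOrientation G D₁) (h₂ : IsOrientation G D₂)
    (ha₁ : IsAlternating D₁) (ha₂ : IsAlternating D₂) :
    Nonempty ({S : Finset (V × V) // IsMultipathIn D₁ S} ≃o
      {S : Finset (V × V) // IsMultipathIn D₂ S}) := by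
  exact pathPosets_of_alternating_orderIso_general h₁ h₂ ha₁ ha₂
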